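/- Nonadaptive approximate history independence does not imply adaptive history independence: Fix n ∈ ℕ and let the operation alphabet contain operations ins(w) and del(w) for finite bit strings w. Define an implementation Impl whose tape is r ∈ {0,1}^ℕ and whose state after a finite operation sequence σ is: σ itself, if the first operation of σ equals ins(r|_n) where r|_n is the first n bits of r; and (the tagged value) r|_n otherwise (in particular for the empty sequence), where the state space is the disjoint union of operation sequences and n-bit strings. Then: (a) for every fixed pair of operation sequences σ and σ', the states Impl(σ; R).state and Impl(σ'; R).state, for R uniform on {0,1}^ℕ, are (0, 2·2^{−n})-indistinguishable; and (b) for every tape r, the sequences σ(r) = (ins(r|_n), del(r|_n)) and σ*(r) = the empty sequence are logically equivalent as dictionary operation sequences (both leave the dictionary empty), yet Impl(σ(r); r).state ≠ Impl(σ*(r); r).state. -/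

import Mathlib

/-! A fixed operation sequence `σ` starts with `ins(r|ₙ)` only for tapes `r` whose first `n` bits
are one particular string, an event of probability at most `2⁻ⁿ` (`measure_hit_le`). Outside this
event the state is `r|ₙ` whatever `σ` is, so for two fixed sequences the states coincide except
with probability at most `2 · 2⁻ⁿ`; that coupling gives part (a). An adversary who sees `r` can play
`ins(r|ₙ)` first, which leaves the operation sequence itself in the state; this gives part (b). -/

open MeasureTheory
open scoped ENNReal

/-- Dictionary operations on finite bit strings: insertions and deletions. -/
inductive DOp where
  | ins : List Bool → DOp
  | del : List Bool → DOp
deriving DecidableEq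

instance : MeasurableSpace (List DOp) := ⊤
instance : MeasurableSpace (List Bool) := ⊤

/-- The first `n` bits of an infinite bit sequence. -/
def prefixn (n : ℕ) (r : ℕ → Bool) : List Bool :=
  List.ofFn fun i : Fin n => r ↑i

/-- The state of the implementation after running the operation sequence `σ` on tape `r`:
it is `σ` itself if the first operation of `σ` equals `ins(r|ₙ)`, and (the tagged value)
`r|ₙ` otherwise (in particular for the empty sequence). -/
def implState (n : ℕ) (σ : List DOp) (r : ℕ → Bool) : List DOp ⊕ List Bool :=
  if σ.head? = some (DOp.ins (prefixn n r)) then Sum.inl σ else Sum.inr (prefixn n r)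

/-- One step of the dictionary ADT: `ins w` adds `w` to the logical set, `del w` removes it. -/
def dictStep (s : Set (List Bool)) : DOp → Set (List Bool)
  | .ins w => insert w s
  | .del w => s \ {w}

/-- The logical state (set of currently inserted strings) after an operation sequence,
starting from the empty set. -/
def dictRun (σ : List DOp) : Set (List Bool) :=
  σ.foldl dictStep ∅

/-- The state depends on the tape only through its first `n` bits, so it factors through the finite
discrete space `Fin n → Bool`. -/
lemma measurable_implState (n : ℕ) (σ : List DOp) : Measurable (implState n σ) := by
  let g : (Fin n → Bool) → List DOp ⊕ List Bool := fun v =>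
    if σ.head? = some (DOp.ins (List.ofFn v)) then Sum.inl σ else Sum.inr (List.ofFn v)
  have hg : Measurable g := Measurable.of_discrete
  have hp : Measurable (fun (r : ℕ → Bool) (i : Fin n) => r ↑i) :=
    measurable_pi_lambda _ fun i => measurable_pi_apply _
  exact hg.comp hp

/-- The tapes for which `σ` guesses the secret prefix in its first operation. -/
def hit (n : ℕ) (σ : List DOp) : Set (ℕ → Bool) :=
  {r | σ.head? = some (DOp.ins (prefixn n r))}

lemma measure_hit_le (n : ℕ) (Q : Measure (ℕ → Bool))
    (hQ : ∀ (m : ℕ) (w : Fin m → Bool),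
      Q {x | ∀ i : Fin m, x ↑i = w i} = (1 / 2 : ℝ≥0∞) ^ m) (σ : List DOp) :
    Q (hit n σ) ≤ (1 / 2 : ℝ≥0∞) ^ n := by
  rcases (hit n σ).eq_empty_or_nonempty with h | ⟨r₀, h₀⟩
  · simp [h]
  · rw [← hQ n fun i => r₀ i]
    refine measure_mono fun r hr i => ?_
    have h₁ : some (DOp.ins (prefixn n r)) = some (DOp.ins (prefixn n r₀)) := hr.symm.trans h₀
    simp only [Option.some.injEq, DOp.ins.injEq] at h₁
    exact congrFun (List.ofFn_injective h₁) i

lemma map_implState_le (n : ℕ) (Q : Measure (ℕ → Bool))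
    (hQ : ∀ (m : ℕ) (w : Fin m → Bool),
      Q {x | ∀ i : Fin m, x ↑i = w i} = (1 / 2 : ℝ≥0∞) ^ m) (σ τ : List DOp)
    (E : Set (List DOp ⊕ List Bool)) :
    (Q.map (implState n σ)) E ≤
      ENNReal.ofReal (Real.exp 0) * (Q.map (implState n τ)) E +
        ENNReal.ofReal (2 * (2 : ℝ)⁻¹ ^ n) := by
  have hE : MeasurableSet E := measurableSet_sum_iff.2 ⟨trivial, trivial⟩
  have hδ : ENNReal.ofReal (2 * (2 : ℝ)⁻¹ ^ n) = (1 / 2 : ℝ≥0∞) ^ n + (1 / 2 : ℝ≥0∞) ^ n := by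
    rw [ENNReal.ofReal_mul (by norm_num), ENNReal.ofReal_pow (by norm_num),
      ENNReal.ofReal_inv_of_pos (by norm_num), ← two_mul]
    simp
  rw [Measure.map_apply (measurable_implState n σ) hE,
    Measure.map_apply (measurable_implState n τ) hE, hδ, Real.exp_zero, ENNReal.ofReal_one, one_mul]
  have hsub : implState n σ ⁻¹' E ⊆ implState n τ ⁻¹' E ∪ (hit n σ ∪ hit n τ) := by
    intro r hr
    by_cases h : r ∈ hit n σ
    · exact Or.inr (Or.inl h)
    by_cases hτ : r ∈ hit n τ
    · exact Or.inr (Or.inr hτ)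
    left
    have e : implState n σ r = Sum.inr (prefixn n r) := if_neg h
    have eτ : implState n τ r = Sum.inr (prefixn n r) := if_neg hτ
    rw [Set.mem_preimage, e] at hr
    rwa [Set.mem_preimage, eτ]
  refine (measure_mono hsub).trans ((measure_union_le _ _).trans ?_)
  gcongr
  refine (measure_union_le _ _).trans ?_
  gcongr
  · exact measure_hit_le n Q hQ σ
  · exact measure_hit_le n Q hQ τ

/-- Nonadaptive approximate history independence does not imply adaptive history
independence: (a) for every fixed pair of operation sequences `σ, σ'`, the states
`Impl(σ; R).state` and `Impl(σ'; R).state` for `R` a uniform random tape are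
`(0, 2·2^{−n})`-indistinguishable; (b) yet for every tape `r`, the sequences
`(ins(r|ₙ), del(r|ₙ))` and the empty sequence are logically equivalent dictionary
operation sequences on which the implementation's states differ. -/
theorem nonadaptive_HI_not_adaptive (n : ℕ)
    (Q : Measure (ℕ → Bool)) [IsProbabilityMeasure Q]
    (hQ : ∀ (m : ℕ) (w : Fin m → Bool),
      Q {x | ∀ i : Fin m, x ↑i = w i} = (1 / 2 : ℝ≥0∞) ^ m) :
    (∀ σ σ' : List DOp, ∀ E : Set (List DOp ⊕ List Bool),
      (Q.map (implState n σ)) E ≤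
        ENNReal.ofReal (Real.exp 0) * (Q.map (implState n σ')) E +
          ENNReal.ofReal (2 * (2 : ℝ)⁻¹ ^ n) ∧
      (Q.map (implState n σ')) E ≤
        ENNReal.ofReal (Real.exp 0) * (Q.map (implState n σ)) E +
          ENNReal.ofReal (2 * (2 : ℝ)⁻¹ ^ n)) ∧
    (∀ r : ℕ → Bool,
      dictRun [DOp.ins (prefixn n r), DOp.del (prefixn n r)] = dictRun [] ∧
      implState n [DOp.ins (prefixn n r), DOp.del (prefixn n r)] r ≠ implState n [] r) := by
  refine ⟨fun σ σ' E => ⟨map_implState_le n Q hQ σ σ' E, map_implState_le n Q hQ σ' σ E⟩,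
    fun r => ⟨?_, ?_⟩⟩
  · simp [dictRun, dictStep]
  · simp [implState]
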